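/- arXiv:1205.5059 — 2 statements merged into one kernel-verified Lean document; each statement's English description precedes it below -/
import Mathlib

section
/- (Hobby–Rice theorem, partition form.) Let n ≥ 1 and let f_1, …, f_n ∈ L¹([0,1]) be real-valued. Then there exist an integer r with 0 ≤ r ≤ n and points 0 = α_0 < α_1 < ⋯ < α_r < α_{r+1} = 1 such that Σ_{m=1}^{r+1} (−1)^m ∫_{α_{m−1}}^{α_m} f_j(x) dx = 0 for all 1 ≤ j ≤ n. -/
open MeasureTheory

/-!
Write `H x = ∫₀ˣ (f₁, …, fₙ)`, a continuous curve in `ℝⁿ`. For `0 = t₀ ≤ t₁ ≤ ⋯ ≤ t_{n+1} = 1` the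
alternating sum of the increments of `H` is a point of `ℝⁿ`, and the theorem says that `0` is attained
up to removing empty intervals. The attained points form a compact set (`isCompact_blocks`), so
if `0` were missed, all of them would have sup norm at least some `η > 0`; this is refuted by a
direct discrete Borsuk–Ulam (Tucker–Fan) argument, as follows.

Cut `[0,1]` into short intervals on which `H` has increments `Δ k`. Sign patterns on these intervals
with at most `d` sign changes form a `d`-sphere, mapped to `ℝⁿ` by `∑ ± Δ k`. Only the image points
matter, so a simplex is a list of vectors, and a mod 2 chain is described through the functional
that evaluates cochains `List V → ZMod 2` on it. Adding the intervals one at a time yields a chain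
`hemisphere` of each dimension `d`, built from shifts and prisms, whose boundary is the sum
of the hemisphere of dimension `d - 1` and its antipode (`hemisphere_cobd`).

Label a vector by the index and sign of a coordinate of maximal modulus. Simplices are small, hence
never carry opposite labels `±j`. Let `fan b` be the cochain that is `1` on simplices whose labels,
sorted by index, have alternating signs starting with `b`. Then `cobd (fan b) = fan b + fan (!b)`
(`cobd_fan`), and the antipode exchanges `fan b` and `fan (!b)` (`fan_map_opp`). By Stokes,
`fan true + fan false` takes the same value on the hemispheres of all dimensions, which is `1`
in dimension `0`. In dimension `n` it must be `0`, because an alternating simplex there has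
`n + 1` labels of distinct index among only `n` (`fan_eq_zero`). So `0` is attained
(`zero_mem_blocks`), and `exists_strict` removes the empty intervals.
-/

namespace HobbyRice

/-! ### Mod 2 cochains on lists -/

section Cochains

variable {V : Type*}

/-- The simplicial coboundary: the value on a simplex `σ`, given by the list of its vertices, is the
sum of `φ` over the faces obtained by deleting one entry. The empty list counts as a face of a
vertex, as in the augmented complex. -/
def cobd : (List V → ZMod 2) → List V → ZMod 2
  | _, [] => 0
  | φ, s :: σ => φ σ + cobd (fun τ => φ (s :: τ)) σ

theorem cobd_add (φ ψ : List V → ZMod 2) (σ : List V) :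
    cobd (fun τ => φ τ + ψ τ) σ = cobd φ σ + cobd ψ σ := by
  induction σ generalizing φ ψ with
  | nil => simp [cobd]
  | cons s σ ih => simp only [cobd, ih]; ring

theorem cobd_congr {φ ψ : List V → ZMod 2} {σ : List V}
    (h : ∀ τ, τ.Sublist σ → φ τ = ψ τ) : cobd φ σ = cobd ψ σ := by
  induction σ generalizing φ ψ with
  | nil => rfl
  | cons s σ ih =>
    simp only [cobd]
    rw [h σ (List.sublist_cons_self s σ), ih fun τ hτ => h _ (hτ.cons_cons s)]

theorem cobd_map {W : Type*} (g : V → W) (φ : List W → ZMod 2) (σ : List V) :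
    cobd (fun τ => φ (τ.map g)) σ = cobd φ (σ.map g) := by
  induction σ generalizing φ with
  | nil => rfl
  | cons s σ ih =>
    simp only [cobd, List.map_cons]
    rw [← ih]

/-- The coboundary of a cochain that ignores the order of the vertices ignores it too. -/
theorem cobd_perm {φ : List V → ZMod 2} (hφ : ∀ σ τ, σ.Perm τ → φ σ = φ τ)
    {σ τ : List V} (h : σ.Perm τ) : cobd φ σ = cobd φ τ := by
  induction h generalizing φ with
  | nil => rfl
  | cons a h ih =>
    simp only [cobd]
    rw [hφ _ _ h, ih fun _ _ h' => hφ _ _ (h'.cons a)]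
  | swap a b l =>
    simp only [cobd]
    rw [cobd_congr (φ := fun τ => φ (a :: b :: τ)) (ψ := fun τ => φ (b :: a :: τ))
      fun τ _ => hφ _ _ (List.Perm.swap b a τ)]
    ring
  | trans _ _ ih₁ ih₂ => rw [ih₁ hφ, ih₂ hφ]

end Cochains

/-! ### Prisms and hemispheres -/

section Chains

variable {V : Type*} [AddCommGroup V]

/-- The prism operator on cochains: the sum of `φ` over the simplices
`s₀ + Δ, …, sᵢ + Δ, sᵢ - Δ, …, s_d - Δ` that triangulate the prism between the translates of
`σ = s₀, …, s_d` by `Δ` and `-Δ`. -/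
def prism (Δ : V) : (List V → ZMod 2) → List V → ZMod 2
  | _, [] => 0
  | φ, s :: σ => φ ((s + Δ) :: (s - Δ) :: σ.map (· - Δ)) + prism Δ (fun τ => φ ((s + Δ) :: τ)) σ

/-- The antipodal simplex, with its vertices in reverse order: negation exchanges the top and bottom
of a prism, so the reversal is what makes `prism` commute with it. -/
def antipode (σ : List V) : List V := (σ.map Neg.neg).reverse

theorem prism_add (Δ : V) (φ ψ : List V → ZMod 2) (σ : List V) :
    prism Δ (fun τ => φ τ + ψ τ) σ = prism Δ φ σ + prism Δ ψ σ := by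
  induction σ generalizing φ ψ with
  | nil => simp [prism]
  | cons s σ ih => simp only [prism, ih]; ring

/-- Two cochains have the same prism on `σ` when they agree on lists of the right length with entries
in the two translates of `σ`. -/
theorem prism_congr {Δ : V} {φ ψ : List V → ZMod 2} {σ : List V}
    (h : ∀ τ : List V, τ.length = σ.length + 1 →
      (∀ v ∈ τ, ∃ w ∈ σ, v = w + Δ ∨ v = w - Δ) → φ τ = ψ τ) :
    prism Δ φ σ = prism Δ ψ σ := by
  induction σ generalizing φ ψ with
  | nil => rfl
  | cons s σ ih =>
    simp only [prism]
    congr 1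
    · apply h
      · simp
      · intro v hv
        simp only [List.mem_cons, List.mem_map] at hv ⊢
        rcases hv with rfl | rfl | ⟨w, hw, rfl⟩
        · exact ⟨s, Or.inl rfl, Or.inl rfl⟩
        · exact ⟨s, Or.inl rfl, Or.inr rfl⟩
        · exact ⟨w, Or.inr hw, Or.inr rfl⟩
    · apply ih
      intro τ hl hτ
      apply h
      · simp [hl]
      · intro v hv
        rcases List.mem_cons.1 hv with rfl | hv
        · exact ⟨s, by simp, Or.inl rfl⟩
        · obtain ⟨w, hw, h'⟩ := hτ v hv
          exact ⟨w, by simp [hw], h'⟩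

/-- The prism operator is a chain homotopy between the translations by `Δ` and `-Δ`. -/
theorem prism_cobd (Δ : V) (φ : List V → ZMod 2) (σ : List V) :
    prism Δ (cobd φ) σ =
      cobd (prism Δ φ) σ + (φ (σ.map (· + Δ)) + φ (σ.map (· - Δ))) := by
  induction σ generalizing φ with
  | nil => simp [prism, cobd, CharTwo.add_self_eq_zero]
  | cons s σ ih =>
    have h2 : ∀ x : ZMod 2, x + x = 0 := CharTwo.add_self_eq_zero
    simp only [prism, cobd, List.map_cons]
    rw [prism_add, cobd_add, ih]
    have := cobd_map (· - Δ) (fun τ => φ ((s + Δ) :: (s - Δ) :: τ)) σ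
    rw [this]
    linear_combination h2 (φ ((s + Δ) :: σ.map (· - Δ)))

theorem prism_concat (Δ : V) (φ : List V → ZMod 2) (σ : List V) (s : V) :
    prism Δ φ (σ ++ [s]) =
      prism Δ (fun τ => φ (τ ++ [s - Δ])) σ + φ (σ.map (· + Δ) ++ [s + Δ, s - Δ]) := by
  induction σ generalizing φ with
  | nil => simp [prism]
  | cons a σ ih => simp [prism, ih, add_assoc]

theorem antipode_cons (s : V) (σ : List V) : antipode (s :: σ) = antipode σ ++ [-s] := by simp [antipode]

theorem antipode_map_add (Δ : V) (σ : List V) :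
    antipode (σ.map (· + Δ)) = (antipode σ).map (· - Δ) := by
  simp only [antipode, List.map_reverse, List.map_map]
  congr 2; funext x; simp; abel

theorem antipode_map_sub (Δ : V) (σ : List V) :
    antipode (σ.map (· - Δ)) = (antipode σ).map (· + Δ) := by
  simp only [antipode, List.map_reverse, List.map_map]
  congr 2; funext x; simp; abel

theorem prism_antipode (Δ : V) (φ : List V → ZMod 2) (σ : List V) :
    prism Δ (fun τ => φ (antipode τ)) σ = prism Δ φ (antipode σ) := by
  induction σ generalizing φ with
  | nil => rfl
  | cons s σ ih =>
    simp only [prism, antipode_cons, prism_concat, antipode_map_sub]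
    rw [ih fun τ => φ (τ ++ [-(s + Δ)])]
    simp only [List.append_assoc, List.cons_append, List.nil_append]
    rw [show -(s + Δ) = -s - Δ by abel, show -(s - Δ) = -s + Δ by abel, add_comm]

/-- Evaluation of cochains on a `d`-dimensional hemisphere of signed sums of the first `k` increments
`Δ 0, …, Δ (k - 1)`. A top-dimensional cell consists of sign patterns starting with `+` and with `d`
cuts. Either no cut lies in the last increment, which then carries the sign `(-1) ^ d`, or the
last cut does, and the cell is a prism over a cell of dimension `d - 1`. -/
def hemisphere (Δ : ℕ → V) : ℕ → ℕ → (List V → ZMod 2) → ZMod 2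
  | 0, 0, φ => φ [0]
  | 0, _ + 1, _ => 0
  | k + 1, 0, φ => hemisphere Δ k 0 fun σ => φ (σ.map (· + Δ k))
  | k + 1, d + 1, φ =>
      hemisphere Δ k (d + 1) (fun σ => φ (σ.map (· + (-1 : ℤ) ^ (d + 1) • Δ k))) +
        hemisphere Δ k d (prism (Δ k) φ)

variable (Δ : ℕ → V)

theorem hemisphere_add (k d : ℕ) (φ ψ : List V → ZMod 2) :
    hemisphere Δ k d (fun σ => φ σ + ψ σ) = hemisphere Δ k d φ + hemisphere Δ k d ψ := by
  induction k generalizing d φ ψ with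
  | zero => cases d <;> simp [hemisphere]
  | succ k ih =>
    cases d with
    | zero => simp only [hemisphere]; rw [ih]
    | succ d =>
      simp only [hemisphere]
      rw [ih, funext (prism_add (Δ k) φ ψ), ih]
      ring

/-- The hemisphere of dimension `0` is a single vertex. -/
theorem hemisphere_zero_eq (k : ℕ) : ∃ v : V, ∀ φ, hemisphere Δ k 0 φ = φ [v] := by
  induction k with
  | zero => exact ⟨0, fun φ => rfl⟩
  | succ k ih =>
    obtain ⟨v, hv⟩ := ih
    exact ⟨v + Δ k, fun φ => by simp [hemisphere, hv]⟩

/-- The two ends of a prism are the translates with signs `(-1) ^ d` and `(-1) ^ (d + 1)`, in an order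
depending on the parity of `d`. -/
theorem hemisphere_shift (k d : ℕ) (φ : List V → ZMod 2) :
    hemisphere Δ k d (fun σ => φ (σ.map (· + Δ k))) + hemisphere Δ k d (fun σ => φ (σ.map (· - Δ k))) =
      hemisphere Δ k d (fun σ => φ (σ.map (· + (-1 : ℤ) ^ d • Δ k))) +
        hemisphere Δ k d (fun σ => φ (σ.map (· + (-1 : ℤ) ^ (d + 1) • Δ k))) := by
  rcases Nat.even_or_odd d with h | h
  · simp [h.neg_one_pow, h.add_one.neg_one_pow, sub_eq_add_neg]
  · simp [h.neg_one_pow, h.add_one.neg_one_pow, sub_eq_add_neg, add_comm]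

/-- The Stokes formula: the boundary of the `(d + 1)`-hemisphere is the full `d`-sphere, the sum of the
`d`-hemisphere and its antipode. -/
theorem hemisphere_cobd (k d : ℕ) (φ : List V → ZMod 2) :
    hemisphere Δ k (d + 1) (cobd φ) = hemisphere Δ k d φ + hemisphere Δ k d (fun σ => φ (antipode σ)) := by
  have h2 : ∀ x : ZMod 2, x + x = 0 := CharTwo.add_self_eq_zero
  have hanti : ∀ (e : ℕ) (D : V) (σ : List V), antipode (σ.map (· + (-1 : ℤ) ^ e • D)) =
      (antipode σ).map (· + (-1 : ℤ) ^ (e + 1) • D) := by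
    intro e D σ
    rw [antipode_map_add]
    congr 1
    funext x
    simp [pow_succ, sub_eq_add_neg]
  induction k generalizing d φ with
  | zero =>
    cases d with
    | zero => simp [hemisphere, antipode, h2]
    | succ d => simp [hemisphere]
  | succ k ih =>
    have e1 : hemisphere Δ (k + 1) (d + 1) (cobd φ) =
        hemisphere Δ k (d + 1) (cobd fun σ => φ (σ.map (· + (-1 : ℤ) ^ (d + 1) • Δ k))) +
        (hemisphere Δ k d (cobd (prism (Δ k) φ)) +
        (hemisphere Δ k d (fun σ => φ (σ.map (· + Δ k))) +
          hemisphere Δ k d (fun σ => φ (σ.map (· - Δ k))))) := by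
      simp only [hemisphere]
      rw [funext (prism_cobd (Δ k) φ), hemisphere_add, hemisphere_add]
      congr 2
      funext σ
      exact (cobd_map _ _ _).symm
    rw [e1, hemisphere_shift, ih]
    cases d with
    | zero =>
      obtain ⟨v, hv⟩ := hemisphere_zero_eq Δ k
      have h0 : hemisphere Δ k 0 (cobd (prism (Δ k) φ)) = 0 := by rw [hv]; simp [cobd, prism]
      have := h2 (hemisphere Δ k 0 (fun σ => φ (σ.map (· + (-1 : ℤ) ^ (0 + 1) • Δ k))))
      rw [h0]
      simp only [hemisphere]
      have hf := fun σ : List V => hanti 0 (Δ k) σ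
      simp only [pow_zero, one_smul] at hf ⊢
      simp only [hf]
      linear_combination this
    | succ d =>
      have := h2 (hemisphere Δ k (d + 1) (fun σ => φ (σ.map (· + (-1 : ℤ) ^ (d + 1 + 1) • Δ k))))
      rw [ih]
      simp only [hemisphere, hanti]
      rw [funext (prism_antipode (Δ k) φ)]
      linear_combination this

end Chains

/-! ### Alternating label sequences -/

section Fan

/-- `1` if the list of signs alternates starting with `b` (or is empty), and `0` otherwise. -/
def alt : Bool → List Bool → ZMod 2
  | _, [] => 1
  | b, s :: l => if s = b then alt (!b) l else 0

theorem cobd_alt (b : Bool) (l : List Bool) : cobd (alt b) l = alt b l + alt (!b) l := by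
  have h2 : ∀ x : ZMod 2, x + x = 0 := CharTwo.add_self_eq_zero
  induction l generalizing b with
  | nil => simp [cobd, alt, h2]
  | cons s l ih =>
    have hc : cobd (fun τ => alt b (s :: τ)) l = if s = b then cobd (alt (!b)) l else 0 := by
      by_cases h : s = b
      · simp [alt, h]
      · simp only [alt, h, if_false]
        clear ih
        induction l with
        | nil => rfl
        | cons a l ih => simp [cobd, ih]
    simp only [cobd, hc]
    rw [ih]
    cases s <;> cases b <;> simp [alt] <;> linear_combination h2 _

theorem alt_map_not (b : Bool) (l : List Bool) : alt b (l.map not) = alt (!b) l := by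
  induction l generalizing b with
  | nil => rfl
  | cons s l ih => cases s <;> cases b <;> simp [alt, ih]

theorem isChain_of_alt_ne_zero (b : Bool) (l : List Bool) (h : alt b l ≠ 0) :
    l.IsChain (· ≠ ·) := by
  induction l generalizing b with
  | nil => simp
  | cons s l ih =>
    by_cases hs : s = b
    · simp only [alt, hs, if_true] at h
      have h1 := ih _ h
      cases l with
      | nil => simp
      | cons t l =>
        rw [List.isChain_cons_cons]
        refine ⟨?_, h1⟩
        rintro rfl
        subst hs
        simp [alt] at h
    · simp [alt, hs] at h

variable {n : ℕ}

/-- `1` if the labels, sorted by index, have alternating signs starting with `b`, and `0` otherwise.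
A label is an index with a sign; the lexicographic order makes the sorted list unique. -/
def fan (b : Bool) (l : List (Fin n ×ₗ Bool)) : ZMod 2 :=
  alt b ((l.insertionSort (· ≤ ·)).map fun x => (ofLex x).2)

theorem fan_perm (b : Bool) {l l' : List (Fin n ×ₗ Bool)} (h : l.Perm l') : fan b l = fan b l' := by
  have : l.insertionSort (· ≤ ·) = l'.insertionSort (· ≤ ·) :=
    List.Perm.eq_of_pairwise' (List.pairwise_insertionSort _ _) (List.pairwise_insertionSort _ _)
      (((List.perm_insertionSort _ l).trans h).trans (List.perm_insertionSort _ l').symm)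
  simp [fan, this]

/-- This holds without any hypothesis on `l`: after sorting, it is the statement `cobd_alt` about
lists of signs. -/
theorem cobd_fan (b : Bool) (l : List (Fin n ×ₗ Bool)) :
    cobd (fan b) l = fan b l + fan (!b) l := by
  rw [cobd_perm (fun _ _ h => fan_perm b h) (List.perm_insertionSort (· ≤ ·) l).symm]
  rw [cobd_congr (ψ := fun τ => alt b (τ.map fun x => (ofLex x).2)), cobd_map, cobd_alt]
  · rfl
  · intro τ hτ
    have : τ.insertionSort (· ≤ ·) = τ :=
      ((List.pairwise_insertionSort (· ≤ ·) l).sublist hτ).insertionSort_eq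
    simp [fan, this]

/-- No two labels in the list have the same index and opposite signs. -/
def NoComp (l : List (Fin n ×ₗ Bool)) : Prop :=
  ∀ x ∈ l, ∀ y ∈ l, (ofLex x).1 = (ofLex y).1 → (ofLex x).2 = (ofLex y).2

/-- The label with the same index and the opposite sign. -/
def opp (x : Fin n ×ₗ Bool) : Fin n ×ₗ Bool := toLex ((ofLex x).1, !(ofLex x).2)

theorem fan_map_opp (b : Bool) {l : List (Fin n ×ₗ Bool)} (hl : NoComp l) :
    fan b (l.map opp) = fan (!b) l := by
  have hs : (l.map opp).insertionSort (· ≤ ·) = (l.insertionSort (· ≤ ·)).map opp := by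
    refine List.Perm.eq_of_pairwise' (List.pairwise_insertionSort _ _) ?_
      ((List.perm_insertionSort _ _).trans ((List.perm_insertionSort _ l).symm.map opp))
    rw [List.pairwise_map]
    refine (List.pairwise_insertionSort (· ≤ ·) l).imp_of_mem ?_
    intro x y hx hy hxy
    rw [List.mem_insertionSort] at hx hy
    rcases Prod.Lex.le_iff.1 hxy with h | ⟨h, -⟩
    · exact Prod.Lex.le_iff.2 (Or.inl h)
    · exact Prod.Lex.le_iff.2 (Or.inr ⟨h, by simp [opp, hl x hx y hy h]⟩)
  rw [fan, hs, fan, ← alt_map_not, List.map_map, List.map_map]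
  rfl

/-- Without opposite labels, an alternating list has distinct indices, so at most `n` entries. -/
theorem fan_eq_zero (b : Bool) {l : List (Fin n ×ₗ Bool)} (hl : NoComp l) (hn : n < l.length) :
    fan b l = 0 := by
  by_contra h
  have h1 := isChain_of_alt_ne_zero _ _ h
  rw [List.isChain_map] at h1
  have h2 : ((l.insertionSort (· ≤ ·)).map fun x => (ofLex x).1).IsChain (· < ·) := by
    rw [List.isChain_map]
    have h3 := (List.pairwise_insertionSort (· ≤ ·) l).isChain
    rw [List.isChain_iff_getElem] at h1 h3 ⊢
    intro i hi
    rcases Prod.Lex.le_iff.1 (h3 i hi) with h | ⟨h, -⟩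
    · exact h
    · refine absurd (hl _ ?_ _ ?_ h) (h1 i hi) <;>
        exact (List.mem_insertionSort (· ≤ ·)).1 (List.getElem_mem _)
  have h4 := (List.isChain_iff_pairwise.1 h2).imp (fun h => ne_of_lt h)
  have h5 := List.Nodup.length_le_card h4
  simp at h5
  omega

end Fan
/-! ### Values of alternating sums over partitions -/

section Blocks

variable {n : ℕ} (H : ℝ → Fin n → ℝ)

/-- The pairs `(t_d, v)` with `0 = t₀ ≤ ⋯ ≤ t_d ≤ 1` and `v` the alternating sum of the
increments of `H` over the `d` intervals, the last one having sign `+`. -/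
def blocks : ℕ → Set (ℝ × (Fin n → ℝ))
  | 0 => {(0, 0)}
  | d + 1 => {q | ∃ p ∈ blocks d, p.1 ≤ q.1 ∧ q.1 ≤ 1 ∧ q.2 = H q.1 - H p.1 - p.2}

theorem blocks_step {d : ℕ} {x y : ℝ} {v : Fin n → ℝ} (h : (x, v) ∈ blocks H d) (hxy : x ≤ y)
    (hy : y ≤ 1) : (y, H y - H x - v) ∈ blocks H (d + 1) :=
  ⟨_, h, hxy, hy, rfl⟩

/-- The last interval can be enlarged. -/
theorem blocks_extend {d : ℕ} {x y : ℝ} {v : Fin n → ℝ} (h : (x, v) ∈ blocks H (d + 1))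
    (hxy : x ≤ y) (hy : y ≤ 1) : (y, v + (H y - H x)) ∈ blocks H (d + 1) := by
  obtain ⟨p, hp, hpx, -, hv⟩ := h
  refine ⟨p, hp, hpx.trans hxy, hy, ?_⟩
  simp only at hv ⊢
  rw [hv]
  abel

/-- Empty intervals can be inserted at the left end without changing any sign. -/
theorem blocks_mono : Monotone (blocks H) := by
  refine monotone_nat_of_le_succ fun d => ?_
  induction d with
  | zero =>
    rintro q rfl
    exact ⟨(0, 0), rfl, le_rfl, zero_le_one, by simp⟩
  | succ d ih =>
    rintro q ⟨p, hp, h⟩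
    exact ⟨p, ih hp, h⟩

theorem blocks_nonneg {d : ℕ} {p : ℝ × (Fin n → ℝ)} (hp : p ∈ blocks H d) : 0 ≤ p.1 := by
  induction d generalizing p with
  | zero => rw [show p = (0, 0) from hp]
  | succ d ih =>
    obtain ⟨q, hq, h, -⟩ := hp
    exact (ih hq).trans h

theorem isCompact_blocks (hH : Continuous H) (d : ℕ) : IsCompact (blocks H d) := by
  induction d with
  | zero => exact isCompact_singleton
  | succ d ih =>
    have hK : IsCompact ((blocks H d ×ˢ Set.Icc (0 : ℝ) 1) ∩ {z | z.1.1 ≤ z.2}) :=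
      (ih.prod isCompact_Icc).inter_right
        (isClosed_le (continuous_fst.comp continuous_fst) continuous_snd)
    have hg : Continuous fun z : (ℝ × (Fin n → ℝ)) × ℝ => (z.2, H z.2 - H z.1.1 - z.1.2) := by
      fun_prop
    convert hK.image hg using 1
    ext ⟨y, v⟩
    constructor
    · rintro ⟨p, hp, h1, h2, h3⟩
      exact ⟨(p, y), ⟨⟨hp, (blocks_nonneg H hp).trans h1, h2⟩, h1⟩, by
        simp only at h3 ⊢; rw [h3]⟩
    · rintro ⟨⟨p, z⟩, ⟨⟨hp, h1⟩, h2⟩, h3⟩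
      simp only [Prod.mk.injEq] at h3
      obtain ⟨rfl, rfl⟩ := h3
      exact ⟨p, hp, h2, h1.2, rfl⟩

/-- A property of all simplices of the `d`-hemisphere over `[0, x]`: each vertex is, up to the sign
`(-1) ^ d`, an alternating sum over `d + 1` intervals, and the diameter is at most `2dδ`, where `δ`
bounds the increments. -/
def Good (δ x : ℝ) (d : ℕ) (σ : List (Fin n → ℝ)) : Prop :=
  σ.length = d + 1 ∧ (∀ v ∈ σ, (x, (-1 : ℤ) ^ d • v) ∈ blocks H (d + 1)) ∧
    ∀ v ∈ σ, ∀ w ∈ σ, ‖v - w‖ ≤ 2 * d * δ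

variable {H}

theorem Good.shift {δ x y : ℝ} {d : ℕ} {σ : List (Fin n → ℝ)} (h : Good H δ x d σ)
    (hxy : x ≤ y) (hy : y ≤ 1) :
    Good H δ y d (σ.map (· + (-1 : ℤ) ^ d • (H y - H x))) := by
  obtain ⟨h1, h2, h3⟩ := h
  refine ⟨by simpa using h1, ?_, ?_⟩
  · simp only [List.mem_map]
    rintro _ ⟨v, hv, rfl⟩
    have := blocks_extend H (h2 v hv) hxy hy
    convert this using 2
    rw [smul_add, smul_smul, ← mul_pow]
    simp
  · simp only [List.mem_map]
    rintro _ ⟨v, hv, rfl⟩ _ ⟨w, hw, rfl⟩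
    simpa using h3 v hv w hw

theorem Good.prism {δ x y : ℝ} {d : ℕ} {σ : List (Fin n → ℝ)} (h : Good H δ x d σ)
    (hxy : x ≤ y) (hy : y ≤ 1) (hδ : ‖H y - H x‖ ≤ δ) {τ : List (Fin n → ℝ)}
    (hl : τ.length = σ.length + 1)
    (hτ : ∀ v ∈ τ, ∃ w ∈ σ, v = w + (H y - H x) ∨ v = w - (H y - H x)) :
    Good H δ y (d + 1) τ := by
  obtain ⟨h1, h2, h3⟩ := h
  refine ⟨by omega, ?_, ?_⟩
  · intro v hv
    obtain ⟨w, hw, hvw⟩ := hτ v hv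
    have ha := blocks_step H (h2 w hw) hxy hy
    have hb := blocks_step H (blocks_extend H (h2 w hw) hxy hy) le_rfl hy
    rcases Nat.even_or_odd d with hd | hd <;>
      simp only [hd.neg_one_pow, hd.add_one.neg_one_pow, one_smul, neg_smul] at ha hb ⊢ <;>
      rcases hvw with rfl | rfl
    · convert hb using 2; abel
    · convert ha using 2; abel
    · convert ha using 2; abel
    · convert hb using 2; abel
  · intro v hv v' hv'
    obtain ⟨w, hw, hvw⟩ := hτ v hv
    obtain ⟨w', hw', hvw'⟩ := hτ v' hv'
    have e1 : ‖v - w‖ ≤ δ := by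
      rcases hvw with rfl | rfl
      · simpa using hδ
      · simpa [norm_sub_rev] using hδ
    have e2 : ‖w' - v'‖ ≤ δ := by
      rcases hvw' with rfl | rfl
      · simpa [norm_sub_rev] using hδ
      · simpa using hδ
    have e3 := h3 w hw w' hw'
    have e4 : v - v' = (v - w) + (w - w') + (w' - v') := by abel
    have e5 := norm_add₃_le (a := v - w) (b := w - w') (c := w' - v')
    rw [← e4] at e5
    push_cast
    linarith

/-- The hemispheres are supported on `Good` simplices. -/
theorem hemisphere_congr {δ : ℝ} {x : ℕ → ℝ} (hx0 : x 0 = 0) (hx : Monotone x) (hx1 : ∀ k, x k ≤ 1)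
    (hδ : ∀ k, ‖H (x (k + 1)) - H (x k)‖ ≤ δ) {k d : ℕ} {φ ψ : List (Fin n → ℝ) → ZMod 2}
    (h : ∀ σ, Good H δ (x k) d σ → φ σ = ψ σ) :
    hemisphere (fun k => H (x (k + 1)) - H (x k)) k d φ =
      hemisphere (fun k => H (x (k + 1)) - H (x k)) k d ψ := by
  induction k generalizing d φ ψ with
  | zero =>
    cases d with
    | zero =>
      refine h _ ⟨rfl, ?_, ?_⟩
      · intro v hv
        rw [List.mem_singleton.1 hv, smul_zero, hx0]
        exact blocks_mono H (Nat.zero_le 1) rfl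
      · simp
    | succ d => rfl
  | succ k ih =>
    have hs : x k ≤ x (k + 1) := hx k.le_succ
    cases d with
    | zero =>
      refine ih fun σ hσ => h _ ?_
      simpa using hσ.shift hs (hx1 _)
    | succ d =>
      simp only [hemisphere]
      congr 1
      · exact ih fun σ hσ => h _ (hσ.shift hs (hx1 _))
      · exact ih fun σ hσ => prism_congr fun τ hl hτ => h _ (hσ.prism hs (hx1 _) (hδ k) hl hτ)

end Blocks

/-! ### Labels and the discrete Borsuk–Ulam argument -/

section Label

variable {n : ℕ} [NeZero n]

theorem exists_argmax (a : Fin n → ℝ) : ∃ j, ∀ i, a i ≤ a j := Finite.exists_max a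

/-- The index of some coordinate of maximal modulus, chosen as a function of `|v|` only, together with
its sign (`true` for positive). -/
noncomputable def label (v : Fin n → ℝ) : Fin n ×ₗ Bool :=
  toLex ((exists_argmax |v|).choose, decide (0 < v (exists_argmax |v|).choose))

theorem norm_le_label (v : Fin n → ℝ) : ‖v‖ ≤ |v (ofLex (label v)).1| :=
  (pi_norm_le_iff_of_nonneg (abs_nonneg _)).2 fun i => (exists_argmax |v|).choose_spec i

theorem label_neg {v : Fin n → ℝ} (hv : v ≠ 0) : label (-v) = opp (label v) := by
  have h0 : v (exists_argmax |v|).choose ≠ 0 := by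
    have := (norm_pos_iff.2 hv).trans_le (norm_le_label v)
    exact abs_pos.1 this
  have h1 : (exists_argmax |-v|).choose = (exists_argmax |v|).choose := by
    congr! 4 with j i <;> simp
  simp only [label, opp, h1, ofLex_toLex, Pi.neg_apply]
  congr 2
  rw [← decide_not]
  congr 1
  rw [not_lt, neg_pos, h0.le_iff_lt]

/-- Long vectors that are close to each other do not have opposite labels. -/
theorem label_ne_comp {η : ℝ} {v w : Fin n → ℝ} (hv : η ≤ ‖v‖) (hw : η ≤ ‖w‖)
    (hvw : ‖v - w‖ < 2 * η) (h : (ofLex (label v)).1 = (ofLex (label w)).1) :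
    (ofLex (label v)).2 = (ofLex (label w)).2 := by
  have h1 := hv.trans (norm_le_label v)
  have h2 := hw.trans (norm_le_label w)
  have h3 := (norm_le_pi_norm (v - w) (ofLex (label w)).1).trans_lt hvw
  rw [h] at h1
  change decide (0 < v (ofLex (label v)).1) = decide (0 < w (ofLex (label w)).1)
  rw [h, decide_eq_decide]
  rw [Pi.sub_apply, Real.norm_eq_abs] at h3
  obtain ⟨h4, h5⟩ := abs_lt.1 h3
  constructor <;> intro h6
  · by_contra h7
    rw [abs_of_pos h6] at h1
    rw [abs_of_nonpos (not_lt.1 h7)] at h2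
    linarith
  · by_contra h7
    rw [abs_of_pos h6] at h2
    rw [abs_of_nonpos (not_lt.1 h7)] at h1
    linarith

/-- The Hobby–Rice theorem with possibly empty intervals. -/
theorem zero_mem_blocks {H : ℝ → Fin n → ℝ} (hH : Continuous H) : (1, 0) ∈ blocks H (n + 1) := by
  by_contra h0
  obtain ⟨η, hη, hηv⟩ : ∃ η > 0, ∀ v, (1, v) ∈ blocks H (n + 1) → η ≤ ‖v‖ := by
    have ho : {v : Fin n → ℝ | (1, v) ∉ blocks H (n + 1)} ∈ nhds 0 :=
      ((isCompact_blocks H hH _).isClosed.isOpen_compl.preimage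
        (Continuous.prodMk_right (1 : ℝ))).mem_nhds h0
    obtain ⟨η, hη, hb⟩ := Metric.mem_nhds_iff.1 ho
    refine ⟨η, hη, fun v hv => ?_⟩
    by_contra hlt
    exact hb (by simpa using hlt) hv
  have hn : (0 : ℝ) < n := Nat.cast_pos.2 (NeZero.pos n)
  set δ : ℝ := η / (2 * n) with hδdef
  have hδ : 0 < δ := by positivity
  obtain ⟨ε, hε, hu⟩ := Metric.uniformContinuousOn_iff.1
    ((isCompact_Icc (a := (0 : ℝ)) (b := 1)).uniformContinuousOn_of_continuous
      hH.continuousOn) δ hδ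
  obtain ⟨M, hM⟩ := exists_nat_one_div_lt hε
  let x : ℕ → ℝ := fun k => min (k * (1 / ((M : ℝ) + 1))) 1
  have hM0 : (0 : ℝ) < 1 / ((M : ℝ) + 1) := by positivity
  have hx0 : x 0 = 0 := by simp [x]
  have hx1 : ∀ k, x k ≤ 1 := fun k => min_le_right _ _
  have hx : Monotone x := by
    intro a b hab
    have : (a : ℝ) ≤ b := Nat.cast_le.2 hab
    simp only [x]
    gcongr
  have hxM : x (M + 1) = 1 := by
    have : ((M : ℝ) + 1) * (1 / ((M : ℝ) + 1)) = 1 := by field_simp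
    simp only [x, Nat.cast_add, Nat.cast_one, this, min_self]
  have hxn : ∀ k, 0 ≤ x k := fun k => hx0 ▸ hx k.zero_le
  have hΔ : ∀ k, ‖H (x (k + 1)) - H (x k)‖ ≤ δ := by
    intro k
    rw [← dist_eq_norm]
    refine (hu _ ⟨hxn _, hx1 _⟩ _ ⟨hxn _, hx1 _⟩ ?_).le
    rw [Real.dist_eq]
    refine lt_of_le_of_lt ?_ hM
    refine (abs_min_sub_min_le_max _ _ _ _).trans ?_
    rw [sub_self, abs_zero, max_eq_left (abs_nonneg _)]
    push_cast
    rw [add_mul, one_mul, add_sub_cancel_left, abs_of_pos hM0]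
  have hnorm : ∀ d ≤ n, ∀ σ, Good H δ (x (M + 1)) d σ → ∀ v ∈ σ, η ≤ ‖v‖ := by
    intro d hd σ hσ v hv
    have h1 := hσ.2.1 v hv
    rw [hxM] at h1
    have h2 := hηv _ (blocks_mono H (by omega) h1)
    rcases Nat.even_or_odd d with h | h <;> simpa [h.neg_one_pow] using h2
  have hcomp : ∀ d ≤ n, ∀ σ, Good H δ (x (M + 1)) d σ → NoComp (σ.map label) := by
    intro d hd σ hσ
    simp only [NoComp, List.mem_map]
    rintro _ ⟨v, hv, rfl⟩ _ ⟨w, hw, rfl⟩ h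
    refine label_ne_comp (hnorm d hd σ hσ v hv) (hnorm d hd σ hσ w hw) ?_ h
    refine (hσ.2.2 v hv w hw).trans_lt ?_
    have h1 : (d : ℝ) ≤ n := Nat.cast_le.2 hd
    have h2 : 2 * (n : ℝ) * δ = η := by rw [hδdef]; field_simp
    have h3 : 2 * (d : ℝ) * δ ≤ 2 * n * δ := by gcongr
    linarith
  have key : ∀ d ≤ n, hemisphere (fun k => H (x (k + 1)) - H (x k)) (M + 1) d
      (fun σ => fan true (σ.map label) + fan false (σ.map label)) = 1 := by
    intro d
    induction d with
    | zero =>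
      intro _
      obtain ⟨v, hv⟩ := hemisphere_zero_eq (fun k => H (x (k + 1)) - H (x k)) (M + 1)
      rw [hv]
      cases h : (ofLex (label v)).2 <;> simp [fan, alt, h]
    | succ d ih =>
      intro hd
      rw [← ih (by omega)]
      have e1 : (fun σ : List (Fin n → ℝ) => fan true (σ.map label) + fan false (σ.map label)) =
          cobd fun σ => fan true (σ.map label) := by
        funext σ
        rw [cobd_map, cobd_fan]
        rfl
      conv_lhs => rw [e1]
      rw [hemisphere_cobd, hemisphere_add]
      congr 1
      refine hemisphere_congr hx0 hx hx1 hΔ fun σ hσ => ?_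
      rw [← Bool.not_true, ← fan_map_opp true (hcomp d (by omega) σ hσ)]
      refine fan_perm _ ?_
      rw [antipode, List.map_reverse, List.map_map, List.map_map]
      refine (List.reverse_perm _).trans (List.Perm.of_eq ?_)
      refine List.map_congr_left fun v hv => label_neg ?_
      have := hη.trans_le (hnorm d (by omega) σ hσ v hv)
      exact norm_pos_iff.1 this
  have hz : hemisphere (fun k => H (x (k + 1)) - H (x k)) (M + 1) n
      (fun σ => fan true (σ.map label) + fan false (σ.map label)) =
      hemisphere (fun k => H (x (k + 1)) - H (x k)) (M + 1) n (fun _ => 0 + 0) := by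
    refine hemisphere_congr hx0 hx hx1 hΔ fun σ hσ => ?_
    have hl : n < (σ.map label).length := by simp [hσ.1]
    rw [fan_eq_zero _ (hcomp n le_rfl σ hσ) hl, fan_eq_zero _ (hcomp n le_rfl σ hσ) hl]
  rw [key n le_rfl, hemisphere_add, CharTwo.add_self_eq_zero] at hz
  exact one_ne_zero hz

end Label

/-! ### Removing empty intervals -/

/-- Merging the two neighbours of an empty interval (or dropping it at the left end) keeps the
alternating sum up to a global sign `s`. -/
theorem exists_strict {n : ℕ} (H : ℝ → Fin n → ℝ) {d : ℕ} {y : ℝ} {v : Fin n → ℝ}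
    (h : (y, v) ∈ blocks H d) :
    ∃ r ≤ d, ∃ α : ℕ → ℝ, α 0 = 0 ∧ α r = y ∧ (∀ m < r, α m < α (m + 1)) ∧
      ∃ s : ℤ, (s = 1 ∨ s = -1) ∧
        v = s • ∑ m ∈ Finset.range r, (-1 : ℤ) ^ m • (H (α (m + 1)) - H (α m)) := by
  induction d generalizing y v with
  | zero =>
    obtain ⟨rfl, rfl⟩ := Prod.mk.inj (show (y, v) = (0, 0) from h)
    exact ⟨0, le_rfl, fun _ => 0, rfl, rfl, by simp, 1, Or.inl rfl, by simp⟩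
  | succ d ih =>
    obtain ⟨⟨x, w⟩, hp, hxy, -, hv⟩ := h
    simp only at hxy hv
    obtain ⟨r, hr, α, h0, hx, hα, s, hs, hw⟩ := ih hp
    have hs' : -s = 1 ∨ -s = -1 := by rcases hs with rfl | rfl <;> simp
    rcases hxy.eq_or_lt with rfl | hlt
    · refine ⟨r, by omega, α, h0, hx, hα, -s, hs', ?_⟩
      rw [hv, hw]
      simp
    by_cases hsr : s = -(-1) ^ r
    -- The new block has the sign opposite to that of the last block: append the cut point `y`.
    · have hne : ∀ m ≤ r, Function.update α (r + 1) y m = α m := fun m hm =>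
        Function.update_of_ne (by omega) _ _
      refine ⟨r + 1, by omega, Function.update α (r + 1) y, by rw [hne 0 (by omega), h0],
        by simp, ?_, -s, hs', ?_⟩
      · intro m hm
        rcases (Nat.lt_succ_iff.1 hm).eq_or_lt with rfl | hm'
        · rw [hne m le_rfl, hx]; simpa using hlt
        · rw [hne m hm'.le, hne (m + 1) hm']; exact hα m hm'
      · have e : -s * (-1) ^ r = 1 := by rw [hsr, neg_neg, ← mul_pow]; simp
        have hc : ∑ m ∈ Finset.range r, (-1 : ℤ) ^ m • (H (Function.update α (r + 1) y (m + 1)) -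
            H (Function.update α (r + 1) y m)) =
            ∑ m ∈ Finset.range r, (-1 : ℤ) ^ m • (H (α (m + 1)) - H (α m)) :=
          Finset.sum_congr rfl fun m hm => by
            rw [hne m (Finset.mem_range.1 hm).le, hne (m + 1) (Finset.mem_range.1 hm)]
        rw [Finset.sum_range_succ, hc, hne r le_rfl, Function.update_self, hx, hv, hw,
          smul_add, smul_smul (-s), e]
        simp only [neg_smul, one_smul]
        abel
    -- Otherwise it continues the last block, whose right end moves to `y`.
    have hsr' : s = (-1) ^ r := by
      rcases neg_one_pow_eq_or ℤ r with h | h <;> rw [h] at hsr ⊢ <;>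
        rcases hs with rfl | rfl <;> simp_all
    cases r with
    | zero =>
      refine ⟨1, by omega, fun m => if m = 0 then 0 else y, by simp, by simp, ?_, 1, Or.inl rfl, ?_⟩
      · intro m hm
        obtain rfl : m = 0 := by omega
        simp only [if_true, zero_add, one_ne_zero, if_false]
        rw [← h0, hx]; exact hlt
      · rw [hv, hw, ← hx, h0]; simp
    | succ r =>
      have hne : ∀ m ≤ r, Function.update α (r + 1) y m = α m := fun m hm =>
        Function.update_of_ne (by omega) _ _
      refine ⟨r + 1, by omega, Function.update α (r + 1) y, by rw [hne 0 (by omega), h0],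
        by simp, ?_, -s, hs', ?_⟩
      · intro m hm
        rcases (Nat.lt_succ_iff.1 hm).eq_or_lt with rfl | hm'
        · rw [hne m le_rfl, Function.update_self]
          exact (hα m (by omega)).trans (hx ▸ hlt)
        · rw [hne m hm'.le, hne (m + 1) hm']; exact hα m (by omega)
      · have e : s * (-1) ^ r = -1 := by
          rw [hsr', pow_succ, mul_right_comm, ← mul_pow]; simp
        have hc : ∑ m ∈ Finset.range r, (-1 : ℤ) ^ m • (H (Function.update α (r + 1) y (m + 1)) -
            H (Function.update α (r + 1) y m)) =
            ∑ m ∈ Finset.range r, (-1 : ℤ) ^ m • (H (α (m + 1)) - H (α m)) :=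
          Finset.sum_congr rfl fun m hm => by
            rw [hne m (Finset.mem_range.1 hm).le, hne (m + 1) (Finset.mem_range.1 hm)]
        rw [Finset.sum_range_succ, hc, hne r le_rfl, Function.update_self, hv, hw,
          Finset.sum_range_succ, hx]
        rw [smul_add, smul_add, smul_smul, smul_smul, neg_mul, e]
        simp only [neg_smul, one_smul, neg_neg]
        abel

end HobbyRice

/-- Hobby–Rice theorem, partition form: for `n ≥ 1` real-valued integrable functions on
`[0,1]` there exist `r ≤ n` and points `0 = α₀ < α₁ < ⋯ < α_r < α_{r+1} = 1` with
`∑_{m=1}^{r+1} (−1)^m ∫_{α_{m−1}}^{α_m} f_j = 0` for all `j`. -/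
theorem hobby_rice_partition (n : ℕ) (hn : 1 ≤ n) (f : Fin n → ℝ → ℝ)
    (hf : ∀ j, IntegrableOn (f j) (Set.Icc 0 1)) :
    ∃ r : ℕ, r ≤ n ∧ ∃ α : ℕ → ℝ, α 0 = 0 ∧ α (r + 1) = 1 ∧
      (∀ m, m ≤ r → α m < α (m + 1)) ∧
      ∀ j, ∑ m ∈ Finset.range (r + 1),
        (-1 : ℝ) ^ (m + 1) * ∫ x in (α m)..(α (m + 1)), f j x = 0 := by
  have : NeZero n := ⟨by omega⟩
  -- Extension by zero makes the primitive `H` continuous on all of `ℝ`.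
  let g : Fin n → ℝ → ℝ := fun j => (Set.Icc 0 1).indicator (f j)
  have hg : ∀ j a b, IntervalIntegrable (g j) volume a b := fun j a b =>
    ((integrable_indicator_iff measurableSet_Icc).2 (hf j)).intervalIntegrable
  let H : ℝ → Fin n → ℝ := fun x j => ∫ t in (0 : ℝ)..x, g j t
  have hH : Continuous H :=
    continuous_pi fun j => intervalIntegral.continuous_primitive (hg j) 0
  obtain ⟨r, hr, α, h0, h1, hα, s, hs, hv⟩ :=
    HobbyRice.exists_strict H (HobbyRice.zero_mem_blocks hH)
  cases r with
  | zero => rw [h0] at h1; exact absurd h1 zero_ne_one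
  | succ r =>
    refine ⟨r, by omega, α, h0, h1, fun m hm => hα m (by omega), fun j => ?_⟩
    have hmono : ∀ a b, a ≤ b → b ≤ r + 1 → α a ≤ α b := by
      intro a b hab
      induction b, hab using Nat.le_induction with
      | base => intro _; exact le_rfl
      | succ b _ ih => intro hb; exact (ih (by omega)).trans (hα b (by omega)).le
    have hint : ∀ m ∈ Finset.range (r + 1),
        ∫ x in (α m)..(α (m + 1)), f j x = H (α (m + 1)) j - H (α m) j := by
      intro m hm
      have hm := Finset.mem_range.1 hm
      rw [intervalIntegral.integral_interval_sub_left (hg j _ _) (hg j _ _)]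
      refine intervalIntegral.integral_congr fun t ht => ?_
      rw [Set.uIcc_of_le (hα m hm).le] at ht
      refine (Set.indicator_of_mem ?_ _).symm
      exact ⟨(h0 ▸ hmono 0 m (by omega) (by omega)).trans ht.1,
        ht.2.trans (h1 ▸ hmono (m + 1) (r + 1) (by omega) le_rfl)⟩
    have hsum : ∑ m ∈ Finset.range (r + 1), (-1 : ℤ) ^ m • (H (α (m + 1)) - H (α m)) = 0 := by
      rcases hs with rfl | rfl <;> simpa using hv.symm
    have hj := congrFun hsum j
    rw [Finset.sum_apply] at hj
    rw [Finset.sum_congr rfl fun m hm => by rw [hint m hm], ← neg_eq_zero, ← Finset.sum_neg_distrib]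
    refine Eq.trans (Finset.sum_congr rfl fun m _ => ?_) hj
    simp [pow_succ]
end

section
/- (Hobby–Rice theorem, multiplier form.) Let n ≥ 1 and let f_1, …, f_n ∈ L¹([0,1]) be real-valued. Then there exists a Lebesgue-measurable function h : [0,1] → {−1, 1} such that ∫_0^1 f_j(x) h(x) dx = 0 for all 1 ≤ j ≤ n. -/
/-!
The multiplier is built by an iterated rounding of the function `0`, keeping all the integrals
`∫ f_j h` equal to `0` and staying in `[-1, 1]`.

The distance of `h` from being `±1`-valued is measured by `∫ gap (h x) dx`, where
`gap t = √(1 - t²)`. In one step (`exists_rounding_step`), cut `(0, 1]` into `n + 1` pieces carrying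
equal shares of `∫ gap ∘ h` (`exists_equal_pieces`). The `n` conditions
`∫ f_j (1 - |h|) s = 0` have a nonzero solution `s` that is constant on each piece, normalised so
that `|s| ≤ 1` with equality on some piece (`exists_balanced_step`). Both `h + s (1 - |h|)` and
`h - s (1 - |h|)` are then admissible. As `gap` is concave, averaging over the two signs does not
increase it, and where `|s| = 1` the average is at most `3/4` of the old value. Hence one of the two
signs multiplies `∫ gap ∘ h` by at most `r = 1 - 1 / (4 (n + 1))`.

Iterating yields `h_k` with `∫ gap ∘ h_k ≤ C r ^ k` and `|h_{k+1} - h_k| ≤ 1 - |h_k| ≤ gap ∘ h_k`.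
The sum `∑ gap (h_k x)` is therefore finite for almost every `x`, so `h_k` converges almost
everywhere to a function with values `±1`, and dominated convergence passes the integral conditions
to the limit.
-/

open MeasureTheory

/-- A concave function on `[-1, 1]` vanishing exactly at `±1`. The square-root behaviour at the
endpoints is what makes a rounding step contract it by a fixed factor. -/
noncomputable def gap (t : ℝ) : ℝ := √(1 - t ^ 2)

lemma gap_nonneg (t : ℝ) : 0 ≤ gap t := Real.sqrt_nonneg _

lemma gap_le_one (t : ℝ) : gap t ≤ 1 := by
  unfold gap
  rw [Real.sqrt_le_iff]
  exact ⟨zero_le_one, by nlinarith [sq_nonneg t]⟩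

lemma continuous_gap : Continuous gap := by
  unfold gap
  fun_prop

lemma gap_sq {t : ℝ} (ht : |t| ≤ 1) : gap t ^ 2 = 1 - t ^ 2 := by
  unfold gap
  rw [Real.sq_sqrt]
  nlinarith [abs_nonneg t, sq_abs t]

lemma one_sub_abs_le_gap {t : ℝ} (ht : |t| ≤ 1) : 1 - |t| ≤ gap t := by
  unfold gap
  apply Real.le_sqrt_of_sq_le
  nlinarith [abs_nonneg t, sq_abs t]

lemma abs_add_mul_le {t s : ℝ} (ht : |t| ≤ 1) (hs : |s| ≤ 1) : |t + s * (1 - |t|)| ≤ 1 := by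
  have h1 := abs_add_le t (s * (1 - |t|))
  rw [abs_mul, abs_of_nonneg (sub_nonneg.2 ht)] at h1
  nlinarith [abs_nonneg s]

lemma gap_add_gap_le {t s : ℝ} (ht : |t| ≤ 1) (hs : |s| ≤ 1) :
    gap (t + s * (1 - |t|)) + gap (t + -s * (1 - |t|)) ≤ 2 * gap t := by
  have h1 := gap_sq (abs_add_mul_le ht hs)
  have h2 := gap_sq (abs_add_mul_le ht (s := -s) (by rwa [abs_neg]))
  have h3 := gap_sq ht
  apply le_of_sq_le_sq _ (by linarith [gap_nonneg t])
  nlinarith [sq_nonneg (gap (t + s * (1 - |t|)) - gap (t + -s * (1 - |t|))),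
    sq_nonneg (s * (1 - |t|))]

/-- When `|s| = 1` one of the two endpoints is `±1`, and the other one, `2 |t| - 1` in absolute
value, satisfies `1 - (2 |t| - 1)² = 4 |t| (1 - |t|) ≤ 2 (1 - t²)`. -/
lemma gap_add_gap_le_of_abs_eq_one {t s : ℝ} (ht : |t| ≤ 1) (hs : |s| = 1) :
    gap (t + s * (1 - |t|)) + gap (t + -s * (1 - |t|)) ≤ 3 / 2 * gap t := by
  have h3 := gap_sq ht
  have key : ∀ u v : ℝ, u ^ 2 = 1 → v ^ 2 = (2 * |t| - 1) ^ 2 → gap u + gap v ≤ 3 / 2 * gap t := by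
    intro u v hu hv
    have h0 : gap u = 0 := by simp [gap, hu]
    rw [h0, zero_add]
    conv_lhs => unfold gap
    rw [Real.sqrt_le_iff]
    refine ⟨by linarith [gap_nonneg t], ?_⟩
    rw [mul_pow, h3, hv, ← sq_abs t]
    nlinarith [abs_nonneg t]
  rcases abs_cases t with ⟨h, -⟩ | ⟨h, -⟩ <;>
  rcases (abs_eq zero_le_one).1 hs with rfl | rfl
  · exact key _ _ (by rw [h]; ring) (by rw [h]; ring)
  · rw [add_comm]; exact key _ _ (by rw [h]; ring) (by rw [h]; ring)
  · rw [add_comm]; exact key _ _ (by rw [h]; ring) (by rw [h]; ring)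
  · exact key _ _ (by rw [h]; ring) (by rw [h]; ring)

lemma exists_equal_pieces (N : ℕ) (hN : 0 < N) (w : ℝ → ℝ) (hw0 : ∀ x, 0 ≤ w x)
    (hw : Integrable w (volume.restrict (Set.Ioc 0 1))) :
    ∃ A : Fin N → Set ℝ, (∀ i, MeasurableSet (A i)) ∧ (∀ i j, i ≠ j → Disjoint (A i) (A j)) ∧
      ∀ i, ∫ x in A i, w x ∂(volume.restrict (Set.Ioc 0 1)) =
        (∫ x, w x ∂(volume.restrict (Set.Ioc 0 1))) / N := by
  set μ : Measure ℝ := volume.restrict (Set.Ioc 0 1) with hμ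
  have hN' : (0 : ℝ) < N := by exact_mod_cast hN
  rcases (integral_nonneg hw0 : 0 ≤ ∫ x, w x ∂μ).eq_or_lt with hW | hW
  · exact ⟨fun _ => ∅, fun _ => MeasurableSet.empty, fun _ _ _ => by simp, fun _ => by simp [← hW]⟩
  set W := ∫ x, w x ∂μ with hWdef
  have hii : ∀ a b, IntervalIntegrable w μ a b := fun a b => hw.intervalIntegrable
  set F : ℝ → ℝ := fun x => ∫ y in (0 : ℝ)..x, w y ∂μ with hF
  have hFc : Continuous F := intervalIntegral.continuous_primitive hii 0
  have hF0 : F 0 = 0 := by simp [hF]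
  have hF1 : F 1 = W := by
    simp only [hF, hWdef]
    rw [intervalIntegral.integral_of_le zero_le_one, hμ, Measure.restrict_restrict measurableSet_Ioc,
      Set.inter_self]
  have hFsub : ∀ a b, F b - F a = ∫ y in a..b, w y ∂μ := fun a b =>
    intervalIntegral.integral_interval_sub_left (hii _ _) (hii _ _)
  have hFm : Monotone F := by
    intro a b hab
    have := hFsub a b
    have h2 : 0 ≤ ∫ y in a..b, w y ∂μ := intervalIntegral.integral_nonneg hab fun x _ => hw0 x
    linarith
  have hex : ∀ i : ℕ, ∃ t, i ≤ N → F t = i / N * W := by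
    intro i
    by_cases hi : i ≤ N
    · have hi' : (i : ℝ) ≤ N := by exact_mod_cast hi
      have hmem : (i / N * W : ℝ) ∈ Set.Icc (F 0) (F 1) := by
        rw [hF0, hF1]
        refine ⟨by positivity, ?_⟩
        have : (i / N : ℝ) ≤ 1 := (div_le_one hN').2 hi'
        nlinarith
      obtain ⟨t, -, ht⟩ := intermediate_value_Icc zero_le_one hFc.continuousOn hmem
      exact ⟨t, fun _ => ht⟩
    · exact ⟨0, fun h => absurd h hi⟩
  choose t ht using hex
  have hlt : ∀ i j : ℕ, i < j → j ≤ N → t i < t j := by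
    intro i j hij hj
    apply hFm.reflect_lt
    rw [ht i (by omega), ht j hj]
    have : (i : ℝ) < j := by exact_mod_cast hij
    gcongr
  have hle : ∀ i j : ℕ, i ≤ j → j ≤ N → t i ≤ t j := by
    intro i j hij hj
    rcases hij.eq_or_lt with rfl | h
    · exact le_rfl
    · exact (hlt i j h hj).le
  have hdis : ∀ i j : Fin N, i < j →
      Disjoint (Set.Ioc (t i) (t (i + 1))) (Set.Ioc (t j) (t (j + 1))) := by
    intro i j hij
    rw [Set.disjoint_left]
    intro x hx hx'
    have := hle (i + 1) j hij (by omega)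
    linarith [hx.2, hx'.1]
  refine ⟨fun i => Set.Ioc (t i) (t (i + 1)), fun i => measurableSet_Ioc, ?_, ?_⟩
  · intro i j hij
    rcases lt_or_gt_of_ne hij with h | h
    · exact hdis i j h
    · exact (hdis j i h).symm
  · intro i
    have hi : (i : ℕ) + 1 ≤ N := i.2
    rw [← intervalIntegral.integral_of_le (hlt i (i + 1) (by omega) hi).le, ← hFsub, ht _ hi,
      ht _ (by omega)]
    push_cast
    field_simp
    ring

lemma exists_normalized_kernel {n : ℕ} (M : Fin n → Fin (n + 1) → ℝ) :
    ∃ c : Fin (n + 1) → ℝ, (∀ i, |c i| ≤ 1) ∧ (∃ i, |c i| = 1) ∧ ∀ j, ∑ i, c i * M j i = 0 := by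
  let L : (Fin (n + 1) → ℝ) →ₗ[ℝ] (Fin n → ℝ) := Matrix.mulVecLin (Matrix.of M)
  have hL : L.ker ≠ ⊥ := LinearMap.ker_ne_bot_of_finrank_lt (by simp)
  obtain ⟨b, hb, hb0⟩ := (Submodule.ne_bot_iff _).1 hL
  obtain ⟨i₀, hi₀⟩ := Finite.exists_max fun i => |b i|
  have hpos : 0 < |b i₀| := by
    obtain ⟨i, hi⟩ := Function.ne_iff.1 hb0
    exact (abs_pos.2 hi).trans_le (hi₀ i)
  refine ⟨fun i => b i / |b i₀|, fun i => ?_, ⟨i₀, ?_⟩, fun j => ?_⟩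
  · rw [abs_div, abs_abs]
    exact (div_le_one hpos).2 (hi₀ i)
  · rw [abs_div, abs_abs]
    exact div_self hpos.ne'
  · have h := congrFun (LinearMap.mem_ker.1 hb) j
    simp only [L, Matrix.mulVecLin_apply, Matrix.mulVec, dotProduct, Matrix.of_apply,
      Pi.zero_apply] at h
    have : ∑ i, b i / |b i₀| * M j i = (∑ i, M j i * b i) / |b i₀| := by
      rw [Finset.sum_div]
      exact Finset.sum_congr rfl fun i _ => by ring
    rw [this, h, zero_div]

/-- A step function orthogonal to `g_1, …, g_n`, bounded by `1`, and of modulus `1` on a set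
carrying the share `1 / (n + 1)` of the mass of `w`. -/
lemma exists_balanced_step (n : ℕ) (w : ℝ → ℝ) (hw0 : ∀ x, 0 ≤ w x)
    (hw : Integrable w (volume.restrict (Set.Ioc 0 1))) (g : Fin n → ℝ → ℝ)
    (hg : ∀ j, Integrable (g j) (volume.restrict (Set.Ioc 0 1))) :
    ∃ (s : ℝ → ℝ) (B : Set ℝ), Measurable s ∧ MeasurableSet B ∧ (∀ x, |s x| ≤ 1) ∧
      (∀ x ∈ B, |s x| = 1) ∧
      (∫ x in B, w x ∂(volume.restrict (Set.Ioc 0 1)) =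
        (∫ x, w x ∂(volume.restrict (Set.Ioc 0 1))) / (n + 1)) ∧
      ∀ j, ∫ x, g j x * s x ∂(volume.restrict (Set.Ioc 0 1)) = 0 := by
  set μ : Measure ℝ := volume.restrict (Set.Ioc 0 1) with hμ
  obtain ⟨A, hAm, hAd, hAw⟩ := exists_equal_pieces (n + 1) n.succ_pos w hw0 hw
  obtain ⟨c, hc1, ⟨i₀, hi₀⟩, hc⟩ := exists_normalized_kernel fun j i => ∫ x in A i, g j x ∂μ
  set s : ℝ → ℝ := fun x => ∑ i, c i * (A i).indicator 1 x with hs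
  have hsA : ∀ i, ∀ x ∈ A i, s x = c i := by
    intro i x hx
    simp only [hs]
    rw [Finset.sum_eq_single i]
    · simp [hx]
    · intro k _ hk
      have : x ∉ A k := Set.disjoint_right.1 (hAd k i hk) hx
      simp [this]
    · simp
  refine ⟨s, A i₀, ?_, hAm i₀, ?_, ?_, ?_, ?_⟩
  · exact Finset.measurable_sum _ fun i _ =>
      (measurable_one.indicator (hAm i)).const_mul (c i)
  · intro x
    by_cases hx : ∃ i, x ∈ A i
    · obtain ⟨i, hi⟩ := hx
      rw [hsA i x hi]
      exact hc1 i
    · push Not at hx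
      simp [hs, hx]
  · intro x hx
    rw [hsA i₀ x hx, hi₀]
  · simpa using hAw i₀
  · intro j
    rw [← hc j]
    have h1 : (fun x => g j x * s x) = fun x => ∑ i, c i * (A i).indicator (g j) x := by
      funext x
      simp only [hs, Finset.mul_sum]
      refine Finset.sum_congr rfl fun i _ => ?_
      by_cases hx : x ∈ A i <;> simp [hx, mul_comm]
    rw [h1, integral_finsetSum _ fun i _ => ((hg j).indicator (hAm i)).const_mul (c i)]
    refine Finset.sum_congr rfl fun i _ => ?_
    rw [integral_const_mul, integral_indicator (hAm i)]

lemma integrable_gap_comp {h : ℝ → ℝ} (hm : Measurable h) :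
    Integrable (fun x => gap (h x)) (volume.restrict (Set.Ioc (0 : ℝ) 1)) := by
  refine Integrable.of_bound (C := 1) (continuous_gap.measurable.comp hm).aestronglyMeasurable ?_
  filter_upwards with x
  rw [Real.norm_of_nonneg (gap_nonneg _)]
  exact gap_le_one _

lemma exists_rounding_step (n : ℕ) (f : Fin n → ℝ → ℝ)
    (hf : ∀ j, Integrable (f j) (volume.restrict (Set.Ioc 0 1))) (h : ℝ → ℝ) (hm : Measurable h)
    (h1 : ∀ x, |h x| ≤ 1) :
    ∃ h' : ℝ → ℝ, Measurable h' ∧ (∀ x, |h' x| ≤ 1) ∧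
      (∀ j, ∫ x, f j x * h' x ∂(volume.restrict (Set.Ioc 0 1)) =
        ∫ x, f j x * h x ∂(volume.restrict (Set.Ioc 0 1))) ∧
      (∀ x, |h' x - h x| ≤ gap (h x)) ∧
      ∫ x, gap (h' x) ∂(volume.restrict (Set.Ioc 0 1)) ≤
        (1 - 1 / (4 * (n + 1))) * ∫ x, gap (h x) ∂(volume.restrict (Set.Ioc 0 1)) := by
  set μ : Measure ℝ := volume.restrict (Set.Ioc 0 1) with hμ
  have hgm : Measurable fun x => 1 - |h x| := by fun_prop
  have hgb : ∀ x, ‖1 - |h x|‖ ≤ 1 := fun x => by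
    rw [Real.norm_of_nonneg (sub_nonneg.2 (h1 x))]
    linarith [abs_nonneg (h x)]
  have hg : ∀ j, Integrable (fun x => f j x * (1 - |h x|)) μ := fun j =>
    (hf j).mul_bdd (c := 1) hgm.aestronglyMeasurable (Filter.Eventually.of_forall hgb)
  have hint := integrable_gap_comp hm
  obtain ⟨s, B, hsm, hBm, hs1, hsB, hBw, hsg⟩ :=
    exists_balanced_step n (fun x => gap (h x)) (fun x => gap_nonneg _) hint _ hg
  -- Every conclusion except the contraction holds for each choice of sign.
  have both : ∀ σ : ℝ → ℝ, Measurable σ → (∀ x, |σ x| ≤ 1) →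
      (∀ j, ∫ x, f j x * (1 - |h x|) * σ x ∂μ = 0) →
      Measurable (fun x => h x + σ x * (1 - |h x|)) ∧ (∀ x, |h x + σ x * (1 - |h x|)| ≤ 1) ∧
      (∀ j, ∫ x, f j x * (h x + σ x * (1 - |h x|)) ∂μ = ∫ x, f j x * h x ∂μ) ∧
      (∀ x, |h x + σ x * (1 - |h x|) - h x| ≤ gap (h x)) := by
    intro σ hσm hσ1 hσ
    refine ⟨by fun_prop, fun x => abs_add_mul_le (h1 x) (hσ1 x), fun j => ?_, fun x => ?_⟩
    · have e : (fun x => f j x * (h x + σ x * (1 - |h x|))) =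
          fun x => f j x * h x + f j x * (1 - |h x|) * σ x := by
        funext x; ring
      rw [e, integral_add, hσ j, add_zero]
      · exact (hf j).mul_bdd (c := 1) hm.aestronglyMeasurable (Filter.Eventually.of_forall h1)
      · exact (hg j).mul_bdd (c := 1) hσm.aestronglyMeasurable (Filter.Eventually.of_forall hσ1)
    · rw [add_sub_cancel_left, abs_mul, abs_of_nonneg (sub_nonneg.2 (h1 x))]
      have := one_sub_abs_le_gap (h1 x)
      have := h1 x
      nlinarith [hσ1 x, abs_nonneg (σ x)]
  have hp := both s hsm hs1 hsg
  have hq := both (fun x => -s x) hsm.neg (fun x => by rw [abs_neg]; exact hs1 x) (fun j => by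
    simp only [mul_neg, integral_neg]
    exact neg_eq_zero.2 (hsg j))
  have hpi := integrable_gap_comp hp.1
  have hqi := integrable_gap_comp hq.1
  have hsum : ∫ x, gap (h x + s x * (1 - |h x|)) ∂μ + ∫ x, gap (h x + -s x * (1 - |h x|)) ∂μ ≤
      2 * ((1 - 1 / (4 * (n + 1))) * ∫ x, gap (h x) ∂μ) := by
    have hBi : Integrable (B.indicator fun x => gap (h x)) μ := hint.indicator hBm
    calc _ = ∫ x, gap (h x + s x * (1 - |h x|)) + gap (h x + -s x * (1 - |h x|)) ∂μ :=
          (integral_add hpi hqi).symm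
      _ ≤ ∫ x, 2 * gap (h x) - 1 / 2 * B.indicator (fun x => gap (h x)) x ∂μ := by
          refine integral_mono (hpi.add hqi) ((hint.const_mul 2).sub (hBi.const_mul (1 / 2))) ?_
          intro x
          by_cases hx : x ∈ B
          · have := gap_add_gap_le_of_abs_eq_one (h1 x) (hsB x hx)
            simp only [hx, Set.indicator_of_mem]
            linarith
          · have := gap_add_gap_le (h1 x) (hs1 x)
            simp only [hx, Set.indicator_of_notMem, not_false_eq_true]
            linarith
      _ = 2 * ∫ x, gap (h x) ∂μ - 1 / 2 * ((∫ x, gap (h x) ∂μ) / (n + 1)) := by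
          rw [integral_sub (hint.const_mul 2) (hBi.const_mul (1 / 2)), integral_const_mul,
            integral_const_mul, integral_indicator hBm, hBw]
      _ = _ := by
          field_simp
          ring
  rcases le_or_gt (∫ x, gap (h x + s x * (1 - |h x|)) ∂μ)
    ((1 - 1 / (4 * (n + 1))) * ∫ x, gap (h x) ∂μ) with hle | hgt
  · exact ⟨_, hp.1, hp.2.1, hp.2.2.1, hp.2.2.2, hle⟩
  · exact ⟨_, hq.1, hq.2.1, hq.2.2.1, hq.2.2.2, by linarith⟩

/-- Hobby–Rice theorem, multiplier form: for `n ≥ 1` real-valued integrable functions on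
`[0,1]` there is a measurable `±1`-valued multiplier `h` with `∫_0^1 f_j h = 0` for all `j`. -/
theorem hobby_rice_multiplier (n : ℕ) (hn : 1 ≤ n) (f : Fin n → ℝ → ℝ)
    (hf : ∀ j, IntegrableOn (f j) (Set.Icc 0 1)) :
    ∃ h : ℝ → ℝ, Measurable h ∧ (∀ x ∈ Set.Icc (0:ℝ) 1, h x = -1 ∨ h x = 1) ∧
      ∀ j, ∫ x in (0:ℝ)..1, f j x * h x = 0 := by
  set μ : Measure ℝ := volume.restrict (Set.Ioc 0 1) with hμ
  have hf' : ∀ j, Integrable (f j) μ := fun j => (hf j).mono_set Set.Ioc_subset_Icc_self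
  let S := {h : ℝ → ℝ // Measurable h ∧ ∀ x, |h x| ≤ 1}
  have hstep : ∀ h : S, ∃ h' : S, (∀ j, ∫ x, f j x * h'.1 x ∂μ = ∫ x, f j x * h.1 x ∂μ) ∧
      (∀ x, |h'.1 x - h.1 x| ≤ gap (h.1 x)) ∧
      ∫ x, gap (h'.1 x) ∂μ ≤ (1 - 1 / (4 * (n + 1))) * ∫ x, gap (h.1 x) ∂μ := by
    intro h
    obtain ⟨h', a, b, c⟩ := exists_rounding_step n f hf' h.1 h.2.1 h.2.2
    exact ⟨⟨h', a, b⟩, c⟩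
  choose next hnext_f hnext_dist hnext_gap using hstep
  let u : ℕ → S := fun k => next^[k] ⟨fun _ => 0, measurable_const, fun _ => by simp⟩
  have hu : ∀ k, u (k + 1) = next (u k) := fun k => Function.iterate_succ_apply' _ _ _
  set r : ℝ := 1 - 1 / (4 * (n + 1)) with hr
  have hr1 : r < 1 := by
    have : (0 : ℝ) < 1 / (4 * (n + 1)) := by positivity
    linarith
  have hr0 : 0 ≤ r := by
    have : 1 / (4 * ((n : ℝ) + 1)) ≤ 1 := by
      rw [div_le_one (by positivity)]
      have : (0 : ℝ) ≤ n := n.cast_nonneg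
      linarith
    linarith
  have huf : ∀ k j, ∫ x, f j x * (u k).1 x ∂μ = 0 := by
    intro k j
    induction k with
    | zero => simp [u]
    | succ k ih => rw [hu, hnext_f, ih]
  have hug : ∀ k, ∫ x, gap ((u k).1 x) ∂μ ≤ r ^ k * ∫ x, gap ((u 0).1 x) ∂μ := by
    intro k
    induction k with
    | zero => simp
    | succ k ih =>
      rw [hu]
      calc _ ≤ r * ∫ x, gap ((u k).1 x) ∂μ := hnext_gap _
        _ ≤ r * (r ^ k * ∫ x, gap ((u 0).1 x) ∂μ) := by gcongr
        _ = _ := by ring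
  have hmeas : ∀ k, Measurable fun x => ENNReal.ofReal (gap ((u k).1 x)) := fun k =>
    (continuous_gap.measurable.comp (u k).2.1).ennreal_ofReal
  have hfin : ∫⁻ x, ∑' k, ENNReal.ofReal (gap ((u k).1 x)) ∂μ ≠ ⊤ := by
    rw [lintegral_tsum fun k => (hmeas k).aemeasurable]
    have hsm : Summable fun k => r ^ k * ∫ x, gap ((u 0).1 x) ∂μ :=
      (summable_geometric_of_lt_one hr0 hr1).mul_right _
    refine ne_top_of_le_ne_top hsm.tsum_ofReal_ne_top (ENNReal.tsum_le_tsum fun k => ?_)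
    rw [← ofReal_integral_eq_lintegral_ofReal (integrable_gap_comp (u k).2.1)
      (Filter.Eventually.of_forall fun x => gap_nonneg _)]
    exact ENNReal.ofReal_le_ofReal (hug k)
  have hsummable : ∀ᵐ x ∂μ, Summable fun k => gap ((u k).1 x) := by
    filter_upwards [ae_lt_top (Measurable.tsum hmeas) hfin] with x hx
    have := ENNReal.summable_toReal hx.ne
    simpa only [ENNReal.toReal_ofReal (gap_nonneg _)] using this
  have hconv : ∀ᵐ x ∂μ, ∃ l, Filter.Tendsto (fun k => (u k).1 x) Filter.atTop (nhds l) := by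
    filter_upwards [hsummable] with x hx
    apply cauchySeq_tendsto_of_complete
    apply cauchySeq_of_summable_dist
    refine hx.of_nonneg_of_le (fun k => dist_nonneg) fun k => ?_
    rw [dist_comm, Real.dist_eq, Nat.succ_eq_add_one, hu]
    exact hnext_dist _ x
  obtain ⟨g, hgm, hg⟩ :=
    measurable_limit_of_tendsto_metrizable_ae (fun k => (u k).2.1.aemeasurable) hconv
  have hg1 : ∀ᵐ x ∂μ, g x = -1 ∨ g x = 1 := by
    filter_upwards [hsummable, hg] with x hx hgx
    have h0 : gap (g x) = 0 :=
      tendsto_nhds_unique ((continuous_gap.tendsto _).comp hgx) hx.tendsto_atTop_zero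
    have habs : |g x| ≤ 1 := le_of_tendsto' hgx.abs fun k => (u k).2.2 x
    have := gap_sq habs
    rw [h0] at this
    have hsq : g x ^ 2 = 1 := by linarith
    exact (sq_eq_sq_iff_eq_or_eq_neg.1 (hsq.trans (one_pow 2).symm)).symm
  -- `g` is only almost everywhere `±1`-valued, so it is replaced by its sign.
  refine ⟨fun x => if 0 ≤ g x then 1 else -1,
    Measurable.ite (measurableSet_le measurable_const hgm) measurable_const measurable_const,
    fun x _ => ?_, fun j => ?_⟩
  · by_cases hx : 0 ≤ g x <;> simp [hx]
  · rw [intervalIntegral.integral_of_le zero_le_one]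
    have e : ∫ x, f j x * (if 0 ≤ g x then 1 else -1) ∂μ = ∫ x, f j x * g x ∂μ := by
      apply integral_congr_ae
      filter_upwards [hg1] with x hx
      rcases hx with hx | hx <;> norm_num [hx]
    rw [e]
    have hlim : Filter.Tendsto (fun k => ∫ x, f j x * (u k).1 x ∂μ) Filter.atTop
        (nhds (∫ x, f j x * g x ∂μ)) := by
      refine tendsto_integral_of_dominated_convergence (fun x => ‖f j x‖)
        (fun k => (hf' j).aestronglyMeasurable.mul (u k).2.1.aestronglyMeasurable) (hf' j).norm
        (fun k => Filter.Eventually.of_forall fun x => ?_) ?_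
      · rw [norm_mul]
        exact mul_le_of_le_one_right (norm_nonneg _) ((u k).2.2 x)
      · filter_upwards [hg] with x hx
        exact hx.const_mul _
    simp only [huf] at hlim
    exact tendsto_nhds_unique hlim tendsto_const_nhds
end
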